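/- arXiv:2307.12000 — 3 statements merged into one kernel-verified Lean document; each statement's English description precedes it below -/
import Mathlib

section
/- For every τ > 0, set K = (2·arctan τ)² and θ(x) = cos(√K·x) + τ·sin(√K·x) for x ∈ [0,1]. Then 0 < K < π², θ(x) > 0 for all x ∈ [0,1], −θ''(x) = K·θ(x) for all x ∈ [0,1], −θ'(0) + τ·√K·θ(0) = 0, and θ'(1) + τ·√K·θ(1) = 0. -/
/-!
Write `a = arctan τ ∈ (0, π/2)`, so that `√K = 2a` and `sin a = τ cos a`. The function `θ` is a
shifted cosine: `θ(x) cos a = cos (2ax - a)`. For `x ∈ [0,1]` the phase `2ax - a` lies in `[-a, a]`,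
inside `(-π/2, π/2)`, whence positivity. The boundary condition at `1` reduces, by the double angle
formulas and `sin a = τ cos a`, to a polynomial identity in `τ` and `cos a`.
-/

theorem stmt8 (τ : ℝ) (hτ : 0 < τ) :
    let K : ℝ := (2 * Real.arctan τ) ^ 2
    let θ : ℝ → ℝ := fun x => Real.cos (Real.sqrt K * x) + τ * Real.sin (Real.sqrt K * x)
    0 < K ∧ K < Real.pi ^ 2 ∧
    (∀ x ∈ Set.Icc (0:ℝ) 1, 0 < θ x) ∧
    (∀ x ∈ Set.Icc (0:ℝ) 1, -(deriv (deriv θ)) x = K * θ x) ∧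
    -deriv θ 0 + τ * Real.sqrt K * θ 0 = 0 ∧
    deriv θ 1 + τ * Real.sqrt K * θ 1 = 0 := by
  intro K θ
  set a := Real.arctan τ with ha
  have ha0 : 0 < a := Real.arctan_pos.mpr hτ
  have ha1 : a < Real.pi / 2 := Real.arctan_lt_pi_div_two τ
  have hc : 0 < Real.cos a := Real.cos_arctan_pos τ
  have hsin : Real.sin a = τ * Real.cos a := by
    rw [← Real.tan_mul_cos hc.ne', ha, Real.tan_arctan]
  have hs : Real.sqrt K = 2 * a := Real.sqrt_sq (by linarith)
  have hθ : θ = fun x => Real.cos (2 * a * x) + τ * Real.sin (2 * a * x) := by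
    simp only [θ, hs]
  have hlin : ∀ x : ℝ, HasDerivAt (fun x : ℝ => 2 * a * x) (2 * a) x := fun x => by
    simpa using (hasDerivAt_id x).const_mul (2 * a)
  have hd1 : deriv θ = fun x =>
      -Real.sin (2 * a * x) * (2 * a) + τ * (Real.cos (2 * a * x) * (2 * a)) := by
    rw [hθ]
    funext x
    exact ((hlin x).cos.add ((hlin x).sin.const_mul τ)).deriv
  have hd2 : ∀ x, deriv (deriv θ) x =
      -(Real.cos (2 * a * x) * (2 * a)) * (2 * a)
        + τ * (-Real.sin (2 * a * x) * (2 * a) * (2 * a)) := by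
    intro x
    rw [hd1]
    exact (((hlin x).sin.neg.mul_const (2 * a)).add
      (((hlin x).cos.mul_const (2 * a)).const_mul τ)).deriv
  refine ⟨by positivity, ?_, ?_, ?_, ?_, ?_⟩
  · exact pow_lt_pow_left₀ (by linarith) (by linarith) two_ne_zero
  · rintro x ⟨hx0, hx1⟩
    have hshift : θ x * Real.cos a = Real.cos (2 * a * x - a) := by
      rw [hθ, Real.cos_sub, hsin]
      ring
    have hpos : 0 < Real.cos (2 * a * x - a) :=
      Real.cos_pos_of_mem_Ioo ⟨by nlinarith, by nlinarith⟩
    exact pos_of_mul_pos_left (hshift ▸ hpos) hc.le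
  · intro x _
    rw [hd2, hθ]
    simp only [K]
    ring
  · rw [hd1, hs, hθ]
    simp
  · rw [hd1, hs, hθ]
    simp only [mul_one]
    -- The form `cos² a - sin² a` makes the identity homogeneous of degree two in `cos a`.
    rw [Real.sin_two_mul, Real.cos_two_mul', hsin]
    ring
end

section
/- Let σ > 0, ρ < 0, g0 > 0, M > 0, r > 0, and let θ : [0,1] → ℝ be twice continuously differentiable with θ(x) > 0 for all x ∈ [0,1] and −θ''(x) = (ρ + σ·g0)·θ(x) on [0,1]. Let λ, μ > 0 with λ + μ = σ, and let f, h : ℝ → ℝ satisfy f(s) ≤ g0·s − (M/2)·s² and h(s) ≤ g0·s − (M/2)·s² for all s ∈ [0, r). Set ϑ = −2ρ/(σ·M·min_{x∈[0,1]} θ(x)). If ϑ·max_{x∈[0,1]} θ(x) < r, then for all x ∈ [0,1]: −(ϑ·θ)''(x) ≥ λ·f(ϑ·θ(x)) + μ·h(ϑ·θ(x)). -/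
/-!
Write `m = min θ > 0` and `s = ϑ θ(x)`. The smallness condition puts `s` in `[0, r)`, so the
quadratic bounds give `λ f(s) + μ h(s) ≤ σ (g0 s - (M/2) s²)`, while the eigenvalue equation and
linearity of the second derivative give `-(ϑ θ)''(x) = (ρ + σ g0) s`. The difference of the two
is `s (ρ + σ M s / 2)`, which is nonnegative because `ϑ` is chosen so that `σ M ϑ m = -2ρ` and
`θ(x) ≥ m`.
-/

theorem stmt18 (σ ρ g0 M r : ℝ) (hσ : 0 < σ) (hρ : ρ < 0) (hg0 : 0 < g0)
    (hM : 0 < M) (hr : 0 < r) (θ : ℝ → ℝ)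
    (hθ : ContDiffOn ℝ 2 θ (Set.Icc 0 1))
    (hθpos : ∀ x ∈ Set.Icc (0:ℝ) 1, 0 < θ x)
    (hθeq : ∀ x ∈ Set.Icc (0:ℝ) 1,
      -iteratedDerivWithin 2 θ (Set.Icc 0 1) x = (ρ + σ * g0) * θ x)
    (lam mu : ℝ) (hlam : 0 < lam) (hmu : 0 < mu) (hσ' : lam + mu = σ)
    (f h : ℝ → ℝ)
    (hf : ∀ s ∈ Set.Ico (0:ℝ) r, f s ≤ g0 * s - (M / 2) * s ^ 2)
    (hh : ∀ s ∈ Set.Ico (0:ℝ) r, h s ≤ g0 * s - (M / 2) * s ^ 2)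
    (ϑ : ℝ) (hϑ : ϑ = -2 * ρ / (σ * M * sInf (θ '' Set.Icc 0 1)))
    (hsmall : ϑ * sSup (θ '' Set.Icc 0 1) < r) :
    ∀ x ∈ Set.Icc (0:ℝ) 1,
      lam * f (ϑ * θ x) + mu * h (ϑ * θ x) ≤
        -iteratedDerivWithin 2 (fun y => ϑ * θ y) (Set.Icc 0 1) x := by
  intro x hx
  have hc : IsCompact (θ '' Set.Icc 0 1) := isCompact_Icc.image_of_continuousOn hθ.continuousOn
  have hne : (θ '' Set.Icc 0 1).Nonempty := ⟨θ x, x, hx, rfl⟩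
  -- The minimum is attained, hence positive; otherwise `ϑ` could be a division by zero.
  have hm : 0 < sInf (θ '' Set.Icc 0 1) := by
    obtain ⟨y, hy, hy'⟩ := hc.sInf_mem hne
    rw [← hy']
    exact hθpos y hy
  have hmle : sInf (θ '' Set.Icc 0 1) ≤ θ x := csInf_le hc.bddBelow ⟨x, hx, rfl⟩
  have hleM : θ x ≤ sSup (θ '' Set.Icc 0 1) := le_csSup hc.bddAbove ⟨x, hx, rfl⟩
  have hϑpos : 0 < ϑ := by
    rw [hϑ]
    exact div_pos (by linarith) (by positivity)
  have hkey : σ * M * (ϑ * sInf (θ '' Set.Icc 0 1)) = -2 * ρ := by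
    rw [hϑ]
    field_simp
  have hD : iteratedDerivWithin 2 (fun y => ϑ * θ y) (Set.Icc 0 1) x
      = ϑ * iteratedDerivWithin 2 θ (Set.Icc 0 1) x :=
    iteratedDerivWithin_const_mul hx (uniqueDiffOn_Icc zero_lt_one) ϑ (hθ x hx)
  have hs : 0 < ϑ * θ x := mul_pos hϑpos (hθpos x hx)
  have hsr : ϑ * θ x < r := (mul_le_mul_of_nonneg_left hleM hϑpos.le).trans_lt hsmall
  have hms : ϑ * sInf (θ '' Set.Icc 0 1) ≤ ϑ * θ x := mul_le_mul_of_nonneg_left hmle hϑpos.le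
  have hrhs : -iteratedDerivWithin 2 (fun y => ϑ * θ y) (Set.Icc 0 1) x
      = (ρ + σ * g0) * (ϑ * θ x) := by
    rw [hD]
    linear_combination ϑ * hθeq x hx
  rw [hrhs]
  generalize ϑ * θ x = s at *
  have h1 := mul_le_mul_of_nonneg_left (hf s ⟨hs.le, hsr⟩) hlam.le
  have h2 := mul_le_mul_of_nonneg_left (hh s ⟨hs.le, hsr⟩) hmu.le
  have h3 : 0 ≤ σ * M * s + 2 * ρ := by
    linarith [mul_le_mul_of_nonneg_left hms (mul_pos hσ hM).le]
  have h4 := mul_nonneg hs.le h3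
  subst hσ'
  linarith
end

section
/- Let σ > 0, ρ < 0, g0 > 0, and let θ : [0,1] → ℝ be twice continuously differentiable with θ(x) > 0 for all x ∈ [0,1] and −θ''(x) = (ρ + σ·g0)·θ(x) on [0,1]. Let λ, μ > 0 with λ + μ = σ, and let f, h : ℝ → ℝ be differentiable at 0 with f(0) = h(0) = 0, f'(0) ≥ g0, and h'(0) ≥ g0, and with h(s) ≥ 0 for all s ≥ 0. Then there exists m₀ > 0 such that for every m ∈ (0, m₀] and every x ∈ [0,1]: −(m·θ)''(x) ≤ λ·f(m·θ(x)) + μ·h(m·θ(x)). -/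
/-!
By the equation for `θ`, the left-hand side equals `(ρ + σ * g0) * s` with `s = m * θ x > 0`.
The function `F s = lam * f s + mu * h s` vanishes at `0` and has slope at least `σ * g0` there,
so `F s ≥ (σ * g0 + ρ) * s` for all small `s > 0`, because `ρ < 0`. As `θ` is bounded on the
compact interval, `m * θ x` is small uniformly in `x` once `m` is small.
-/

theorem stmt19 (σ ρ g0 : ℝ) (hσ : 0 < σ) (hρ : ρ < 0) (hg0 : 0 < g0)
    (θ : ℝ → ℝ) (hθ : ContDiffOn ℝ 2 θ (Set.Icc 0 1))
    (hθpos : ∀ x ∈ Set.Icc (0:ℝ) 1, 0 < θ x)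
    (hθeq : ∀ x ∈ Set.Icc (0:ℝ) 1,
      -iteratedDerivWithin 2 θ (Set.Icc 0 1) x = (ρ + σ * g0) * θ x)
    (lam mu : ℝ) (hlam : 0 < lam) (hmu : 0 < mu) (hσ' : lam + mu = σ)
    (f h : ℝ → ℝ) (hfd : DifferentiableAt ℝ f 0) (hhd : DifferentiableAt ℝ h 0)
    (hf0 : f 0 = 0) (hh0 : h 0 = 0) (hf' : g0 ≤ deriv f 0) (hh' : g0 ≤ deriv h 0)
    (hhnn : ∀ s ≥ (0:ℝ), 0 ≤ h s) :
    ∃ m₀ > 0, ∀ m : ℝ, 0 < m → m ≤ m₀ → ∀ x ∈ Set.Icc (0:ℝ) 1,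
      -iteratedDerivWithin 2 (fun y => m * θ y) (Set.Icc 0 1) x ≤
        lam * f (m * θ x) + mu * h (m * θ x) := by
  -- The reaction term along the diagonal, `F s = lam * f s + mu * h s`, and its slope at `0`.
  have hF : HasDerivAt (fun s => lam * f s + mu * h s) (lam * deriv f 0 + mu * deriv h 0) 0 :=
    (hfd.hasDerivAt.const_mul lam).add (hhd.hasDerivAt.const_mul mu)
  have hD : σ * g0 ≤ lam * deriv f 0 + mu * deriv h 0 := by
    rw [← hσ']
    nlinarith [mul_le_mul_of_nonneg_left hf' hlam.le, mul_le_mul_of_nonneg_left hh' hmu.le]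
  generalize lam * deriv f 0 + mu * deriv h 0 = D at hF hD
  -- The gap `-ρ > 0` is the error allowed in the first-order expansion of `F` at `0`.
  have hev := (hasDerivAt_iff_isLittleO.mp hF).bound (neg_pos.mpr hρ)
  obtain ⟨δ, hδ, hball⟩ := Metric.eventually_nhds_iff.mp hev
  obtain ⟨M, hM⟩ := isCompact_Icc.bddAbove_image hθ.continuousOn
  have hM' : ∀ x ∈ Set.Icc (0:ℝ) 1, θ x ≤ M := fun x hx => hM ⟨x, hx, rfl⟩
  have hMpos : 0 < M := (hθpos 0 (by simp)).trans_le (hM' 0 (by simp))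
  refine ⟨δ / (2 * M), by positivity, fun m hm hm₀ x hx => ?_⟩
  have hs : 0 < m * θ x := mul_pos hm (hθpos x hx)
  have hsδ : m * θ x < δ := by
    calc m * θ x ≤ δ / (2 * M) * M :=
          mul_le_mul hm₀ (hM' x hx) (hθpos x hx).le (by positivity)
      _ = δ / 2 := by field_simp
      _ < δ := half_lt_self hδ
  have hb := hball (y := m * θ x) (by rwa [dist_zero_right, Real.norm_of_nonneg hs.le])
  simp only [hf0, hh0, mul_zero, add_zero, sub_zero, smul_eq_mul, Real.norm_eq_abs,
    abs_of_pos hs] at hb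
  have hlow := (abs_le.mp hb).1
  have hder : iteratedDerivWithin 2 (fun y => m * θ y) (Set.Icc 0 1) x
      = m * iteratedDerivWithin 2 θ (Set.Icc 0 1) x :=
    iteratedDerivWithin_const_mul hx (uniqueDiffOn_Icc zero_lt_one) m (hθ x hx)
  have heq : -iteratedDerivWithin 2 (fun y => m * θ y) (Set.Icc 0 1) x
      = (ρ + σ * g0) * (m * θ x) := by
    rw [hder]
    linear_combination m * hθeq x hx
  rw [heq]
  nlinarith [mul_le_mul_of_nonneg_right hD hs.le]
end
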